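/- Fix an even smooth function $\tilde\psi : \mathbb{R} \to [0,1]$ supported in $[-3/2, 3/2]$ and equal to $1$ on $[-5/4, 5/4]$; set $\psi_j(z) := \tilde\psi(|z|/2^j) - \tilde\psi(|z|/2^{j-1})$, and define $\varphi_0(z) := \tilde\psi(|z|)$ and $\varphi_j := \psi_j$ for integers $j \ge 1$. Let $n > 1$ and let $f : \mathbb{R}^3 \times \mathbb{R}^3 \to [0,\infty)$ be measurable with $f \le A$ almost everywhere, $M_1 := \iint (1+|v|) f\,dx\,dv < \infty$ and $M_n := \iint (1+|v|)^n f\,dx\,dv < \infty$. Let $k \in \mathbb{Z}$, let $j_1, j_2$ be nonnegative integers, and let $K : \mathbb{R}^3 \to \mathbb{R}^3$ be measurable with $|K(y)| \le 2^{2k}(1 + 2^k |y|)^{-10}$ for all $y$. Define $E(x) := \int_{\mathbb{R}^3}\int_{\mathbb{R}^3} K(y)\, f(x-y, v)\, \varphi_{j_1}(\slashed v)\, \varphi_{j_2}(v)\,dy\,dv$, where $\slashed v := (v_1,v_2)$. Then there is a constant $C$ (depending only on $n$) such that for all $x$: $|E(x)| \le C \min\{ A\, 2^{-k + 2 j_1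 + j_2},\; 2^{2k - j_2} M_1,\; 2^{2k - n j_2} M_n \}$. -/

import Mathlib

open MeasureTheory Real Set
noncomputable section

abbrev E3 := EuclideanSpace ℝ (Fin 3)

/-- The radial Littlewood–Paley cutoffs `φ_j`: `φ_0(z) = ψ̃(|z|)` and, for `j ≥ 1`,
`φ_j(z) = ψ̃(|z|/2^j) - ψ̃(|z|/2^{j-1})`, here expressed as a function of `r = |z|`. -/
def vphi (ψ : ℝ → ℝ) (j : ℕ) (r : ℝ) : ℝ :=
  if j = 0 then ψ |r| else ψ (|r| / 2 ^ j) - ψ (|r| / 2 ^ (j - 1))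

lemma vphi_abs_le (ψ : ℝ → ℝ) (h : ∀ r, ψ r ∈ Set.Icc (0 : ℝ) 1) (j : ℕ) (r : ℝ) :
    |vphi ψ j r| ≤ 1 := by
  unfold vphi
  split_ifs
  · have := h |r|
    rw [abs_le]; constructor <;> linarith [this.1, this.2]
  · have h1 := h (|r| / 2 ^ j)
    have h2 := h (|r| / 2 ^ (j-1))
    rw [abs_le]; constructor <;> linarith [h1.1, h1.2, h2.1, h2.2]

lemma vphi_upper (ψ : ℝ → ℝ) (hs : Function.support ψ ⊆ Set.Icc (-(3 / 2)) (3 / 2))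
    (j : ℕ) (r : ℝ) (h : vphi ψ j r ≠ 0) : |r| ≤ 3 / 2 * 2 ^ j := by
  by_contra! hc
  have hz : ∀ t : ℝ, 3 / 2 < t → ψ t = 0 := by
    intro t ht
    by_contra h0
    exact absurd (hs h0).2 (not_le.2 ht)
  apply h
  unfold vphi
  split_ifs with h0
  · subst h0
    exact hz _ (by simpa using hc)
  · have e1 : (3:ℝ) / 2 < |r| / 2 ^ j := by rw [lt_div_iff₀ (by positivity)]; exact hc
    have e2 : |r| / 2 ^ j ≤ |r| / 2 ^ (j-1) := by
      gcongr
      · norm_num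
      · omega
    rw [hz _ e1, hz _ (e1.trans_le e2), sub_zero]

lemma vphi_lower (ψ : ℝ → ℝ) (hs : ∀ r : ℝ, |r| ≤ 5 / 4 → ψ r = 1)
    (j : ℕ) (r : ℝ) (h : vphi ψ j r ≠ 0) : (2:ℝ) ^ j ≤ 2 * (1 + |r|) := by
  rcases j with _ | j
  · have := abs_nonneg r
    simp; linarith
  by_contra! hc
  apply h
  unfold vphi
  rw [if_neg (by omega)]
  simp only [Nat.add_sub_cancel]
  have hr := abs_nonneg r
  have hp : (0:ℝ) < 2 ^ j := by positivity
  rw [pow_succ] at hc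
  rw [hs, hs, sub_self]
  · rw [abs_of_nonneg (by positivity), div_le_iff₀ hp]; linarith
  · rw [abs_of_nonneg (by positivity), div_le_iff₀ (by positivity), pow_succ]; linarith

lemma mp_shift (x : E3) : MeasurePreserving (fun p : E3 × E3 => (x - p.1, p.2)) volume volume :=
  (Measure.measurePreserving_sub_left (volume : Measure E3) x).prod (MeasurePreserving.id volume)

lemma me_shift (x : E3) : MeasurableEmbedding (fun p : E3 × E3 => (x - p.1, p.2)) := by
  have : Function.Involutive (fun p : E3 × E3 => (x - p.1, p.2)) := by
    intro p; ext <;> simp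
  exact (MeasurableEquiv.ofInvolutive _ this (mp_shift x).measurable).measurableEmbedding

/-- box in velocity space -/
def vbox (a b : ℝ) : Set E3 :=
  (WithLp.ofLp) ⁻¹' (Set.Icc (![-a, -a, -b] : Fin 3 → ℝ) ![a, a, b])

lemma vbox_meas (a b : ℝ) : MeasurableSet (vbox a b) :=
  (PiLp.volume_preserving_ofLp (Fin 3)).measurable measurableSet_Icc

lemma vbox_vol (a b : ℝ) : volume (vbox a b) =
    ENNReal.ofReal (2 * a) * ENNReal.ofReal (2 * a) * ENNReal.ofReal (2 * b) := by
  unfold vbox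
  rw [(PiLp.volume_preserving_ofLp (Fin 3)).measure_preimage
    measurableSet_Icc.nullMeasurableSet, Real.volume_Icc_pi]
  simp [Fin.prod_univ_three, two_mul]

lemma vbox_real (a b : ℝ) (ha : 0 ≤ a) (hb : 0 ≤ b) :
    volume.real (vbox a b) = 8 * a ^ 2 * b := by
  rw [Measure.real, vbox_vol]
  simp only [ENNReal.toReal_mul]
  rw [ENNReal.toReal_ofReal (by positivity), ENNReal.toReal_ofReal (by positivity)]
  ring

lemma ker_int : Integrable (fun y : E3 => ((1 + ‖y‖) ^ (10 : ℕ))⁻¹) := by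
  have := integrable_one_add_norm (E := E3) (μ := volume) (r := 10) (by simp; norm_num)
  refine this.congr (Filter.Eventually.of_forall fun y => ?_)
  have h : (0:ℝ) ≤ 1 + ‖y‖ := by positivity
  simp only
  rw [Real.rpow_neg h]
  norm_cast

lemma ker_scale_int (k : ℤ) :
    Integrable (fun y : E3 => ((1 + (2:ℝ) ^ k * ‖y‖) ^ (10 : ℕ))⁻¹) := by
  have := ker_int.comp_smul (R := (2:ℝ)^k) (by positivity)
  refine this.congr (Filter.Eventually.of_forall fun y => ?_)
  simp [norm_smul]

lemma ker_scale (k : ℤ) : ∫ y : E3, ((1 + (2:ℝ) ^ k * ‖y‖) ^ (10 : ℕ))⁻¹ =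
    (((2:ℝ) ^ k) ^ 3)⁻¹ * ∫ y : E3, ((1 + ‖y‖) ^ (10 : ℕ))⁻¹ := by
  have := Measure.integral_comp_smul (volume : Measure E3)
    (fun y : E3 => ((1 + ‖y‖) ^ (10 : ℕ))⁻¹) ((2:ℝ)^k)
  simpa [norm_smul] using this

lemma moment_bound (m : ℝ) (hm : 0 ≤ m) (ψ : ℝ → ℝ)
    (h01 : ∀ r, ψ r ∈ Set.Icc (0 : ℝ) 1)
    (h1 : ∀ r : ℝ, |r| ≤ 5 / 4 → ψ r = 1)
    (f : E3 → E3 → ℝ) (hf : ∀ x v, 0 ≤ f x v)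
    (hI : Integrable (fun p : E3 × E3 => (1 + ‖p.2‖) ^ m * f p.1 p.2) volume)
    (k : ℤ) (j₁ j₂ : ℕ) (K : E3 → E3)
    (hK : ∀ y, ‖K y‖ ≤ (2 : ℝ) ^ (2 * k) * (((1 + (2 : ℝ) ^ k * ‖y‖) ^ (10 : ℕ)))⁻¹)
    (x : E3) :
    ‖∫ p : E3 × E3,
        (f (x - p.1) p.2 * vphi ψ j₁ (Real.sqrt (p.2 0 ^ 2 + p.2 1 ^ 2)) *
          vphi ψ j₂ ‖p.2‖) • K p.1‖ ≤
      2 ^ m * ((2 : ℝ) ^ (2 * k) * (2 : ℝ) ^ (-(m * (j₂ : ℝ))) *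
        ∫ p : E3 × E3, (1 + ‖p.2‖) ^ m * f p.1 p.2) := by
  have e := (mp_shift x).integral_comp (me_shift x)
    (fun p : E3 × E3 => (1 + ‖p.2‖) ^ m * f p.1 p.2)
  have i := ((mp_shift x).integrable_comp_emb (me_shift x)).2 hI
  rw [← e, ← integral_const_mul, ← integral_const_mul]
  refine norm_integral_le_of_norm_le ((i.const_mul _).const_mul _)
    (Filter.Eventually.of_forall fun p => ?_)
  have hfp := hf (x - p.1) p.2
  have hKp : ‖K p.1‖ ≤ (2:ℝ) ^ (2 * k) := by
    refine (hK _).trans (mul_le_of_le_one_right (by positivity) (inv_le_one_of_one_le₀ ?_))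
    refine one_le_pow₀ ?_
    have : 0 ≤ (2:ℝ) ^ k * ‖p.1‖ := by positivity
    linarith
  have hv : |vphi ψ j₂ ‖p.2‖| ≤ 2 ^ m * ((2 : ℝ) ^ (-(m * (j₂ : ℝ))) * (1 + ‖p.2‖) ^ m) := by
    by_cases h0 : vphi ψ j₂ ‖p.2‖ = 0
    · rw [h0, abs_zero]; positivity
    · have hl := vphi_lower ψ h1 _ _ h0
      rw [abs_of_nonneg (norm_nonneg _)] at hl
      refine (vphi_abs_le ψ h01 _ _).trans ?_
      have := Real.rpow_le_rpow (by positivity) hl hm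
      rw [Real.mul_rpow (by norm_num) (by positivity), ← Real.rpow_natCast,
        ← Real.rpow_mul (by norm_num), mul_comm (j₂ : ℝ) m] at this
      rw [Real.rpow_neg (by norm_num), mul_left_comm, ← div_eq_inv_mul, le_div_iff₀ (by positivity),
        one_mul]
      exact this
  rw [norm_smul, Real.norm_eq_abs, abs_mul, abs_mul, abs_of_nonneg hfp]
  have hv1 := vphi_abs_le ψ h01 j₁ (Real.sqrt (p.2 0 ^ 2 + p.2 1 ^ 2))
  calc _ ≤ f (x - p.1) p.2 * 1 * (2 ^ m * ((2 : ℝ) ^ (-(m * (j₂ : ℝ))) * (1 + ‖p.2‖) ^ m))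
        * (2:ℝ) ^ (2 * k) := by gcongr
    _ = _ := by ring

lemma sup_bound (ψ : ℝ → ℝ)
    (h01 : ∀ r, ψ r ∈ Set.Icc (0 : ℝ) 1)
    (hs : Function.support ψ ⊆ Set.Icc (-(3 / 2)) (3 / 2))
    (f : E3 → E3 → ℝ) (hf : ∀ x v, 0 ≤ f x v)
    (A : ℝ) (hA0 : 0 < A) (hA : ∀ᵐ p : E3 × E3, f p.1 p.2 ≤ A)
    (k : ℤ) (j₁ j₂ : ℕ) (K : E3 → E3)
    (hK : ∀ y, ‖K y‖ ≤ (2 : ℝ) ^ (2 * k) * (((1 + (2 : ℝ) ^ k * ‖y‖) ^ (10 : ℕ)))⁻¹)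
    (x : E3) :
    ‖∫ p : E3 × E3,
        (f (x - p.1) p.2 * vphi ψ j₁ (Real.sqrt (p.2 0 ^ 2 + p.2 1 ^ 2)) *
          vphi ψ j₂ ‖p.2‖) • K p.1‖ ≤
      (27 * ∫ y : E3, ((1 + ‖y‖) ^ (10 : ℕ))⁻¹) *
        (A * (2 : ℝ) ^ (-k + 2 * (j₁ : ℤ) + (j₂ : ℤ))) := by
  set S := vbox (3 / 2 * 2 ^ j₁) (3 / 2 * 2 ^ j₂) with hS
  have hSm : MeasurableSet S := vbox_meas _ _
  have hSfin : volume S ≠ ⊤ := by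
    rw [hS, vbox_vol]
    exact ENNReal.mul_ne_top (ENNReal.mul_ne_top ENNReal.ofReal_ne_top ENNReal.ofReal_ne_top)
      ENNReal.ofReal_ne_top
  have hSi : Integrable (S.indicator (fun _ : E3 => (1:ℝ))) :=
    (integrable_indicator_iff hSm).2 (integrableOn_const hSfin)
  have hSI : ∫ v, S.indicator (fun _ : E3 => (1:ℝ)) v = 27 * (2 ^ j₁) ^ 2 * 2 ^ j₂ := by
    rw [integral_indicator hSm, setIntegral_const, hS,
      vbox_real _ _ (by positivity) (by positivity), smul_eq_mul]
    ring
  have hi : Integrable (fun p : E3 × E3 => ((1 + (2:ℝ) ^ k * ‖p.1‖) ^ (10 : ℕ))⁻¹ *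
      S.indicator (fun _ : E3 => (1:ℝ)) p.2) := (ker_scale_int k).mul_prod hSi
  have hI : ∫ p : E3 × E3, ((1 + (2:ℝ) ^ k * ‖p.1‖) ^ (10 : ℕ))⁻¹ *
      S.indicator (fun _ : E3 => (1:ℝ)) p.2 = _ := integral_prod_mul (μ := volume) (ν := volume)
        (fun y : E3 => ((1 + (2:ℝ) ^ k * ‖y‖) ^ (10 : ℕ))⁻¹) (S.indicator (fun _ : E3 => (1:ℝ)))
  have hA' := (mp_shift x).quasiMeasurePreserving.ae hA
  have key : ‖∫ p : E3 × E3,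
        (f (x - p.1) p.2 * vphi ψ j₁ (Real.sqrt (p.2 0 ^ 2 + p.2 1 ^ 2)) *
          vphi ψ j₂ ‖p.2‖) • K p.1‖ ≤ ∫ p : E3 × E3, (A * (2:ℝ) ^ (2 * k)) *
      (((1 + (2:ℝ) ^ k * ‖p.1‖) ^ (10 : ℕ))⁻¹ * S.indicator (fun _ : E3 => (1:ℝ)) p.2) := by
    refine norm_integral_le_of_norm_le (hi.const_mul _) ?_
    filter_upwards [hA'] with p hp
    have hfp := hf (x - p.1) p.2
    have hKp := hK p.1
    rw [norm_smul, Real.norm_eq_abs, abs_mul, abs_mul, abs_of_nonneg hfp]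
    by_cases hpS : p.2 ∈ S
    · rw [indicator_of_mem hpS]
      have hv1 := vphi_abs_le ψ h01 j₁ (Real.sqrt (p.2 0 ^ 2 + p.2 1 ^ 2))
      have hv2 := vphi_abs_le ψ h01 j₂ ‖p.2‖
      calc _ ≤ A * 1 * 1 * ((2 : ℝ) ^ (2 * k) * (((1 + (2 : ℝ) ^ k * ‖p.1‖) ^ (10 : ℕ)))⁻¹) := by
            gcongr
        _ = _ := by ring
    · rw [indicator_of_notMem hpS, mul_zero, mul_zero]
      have : vphi ψ j₁ (Real.sqrt (p.2 0 ^ 2 + p.2 1 ^ 2)) = 0 ∨ vphi ψ j₂ ‖p.2‖ = 0 := by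
        by_contra! hc
        apply hpS
        have u1 := vphi_upper ψ hs _ _ hc.1
        have u2 := vphi_upper ψ hs _ _ hc.2
        rw [abs_of_nonneg (Real.sqrt_nonneg _)] at u1
        rw [abs_of_nonneg (norm_nonneg _)] at u2
        have a0 : |p.2 0| ≤ 3 / 2 * 2 ^ j₁ :=
          (Real.abs_le_sqrt (by nlinarith [sq_nonneg (p.2 1)])).trans u1
        have a1 : |p.2 1| ≤ 3 / 2 * 2 ^ j₁ :=
          (Real.abs_le_sqrt (by nlinarith [sq_nonneg (p.2 0)])).trans u1
        have a2 : |p.2 2| ≤ 3 / 2 * 2 ^ j₂ := by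
          have := PiLp.norm_apply_le p.2 2
          rw [Real.norm_eq_abs] at this
          exact this.trans u2
        rw [abs_le] at a0 a1 a2
        constructor
        · intro i
          fin_cases i
          · exact a0.1
          · exact a1.1
          · exact a2.1
        · intro i
          fin_cases i
          · exact a0.2
          · exact a1.2
          · exact a2.2
      rcases this with h | h <;> simp [h]
  refine key.trans (le_of_eq ?_)
  rw [integral_const_mul, hI, hSI, ker_scale, zpow_add₀ (by norm_num), zpow_add₀ (by norm_num),
    zpow_neg, zpow_mul, zpow_mul, zpow_natCast]
  have h2 : ((2:ℝ) ^ (2:ℤ)) ^ k = ((2:ℝ) ^ k) ^ 2 := by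
    rw [← zpow_mul, mul_comm, zpow_mul]; norm_cast
  rw [h2]
  have : (2:ℝ) ^ k ≠ 0 := by positivity
  have h3 : ((2:ℝ) ^ (2:ℤ)) ^ j₁ = ((2:ℝ) ^ j₁) ^ 2 := by
    rw [zpow_ofNat, ← pow_mul, mul_comm, pow_mul]
  rw [h3, zpow_natCast]
  generalize (∫ y : E3, ((1 + ‖y‖) ^ (10 : ℕ))⁻¹) = I
  generalize (2:ℝ) ^ j₁ = a
  field_simp

/-- Bounds for the frequency- and velocity-localized electric field
`E(x) = ∬ K(y) f(x-y,v) φ_{j₁}(v̸) φ_{j₂}(v) dy dv`: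
`|E(x)| ≤ C min{A 2^{-k+2j₁+j₂}, 2^{2k-j₂} M₁, 2^{2k-n j₂} M_n}`. -/
theorem localized_field_bound (n : ℝ) (hn : 1 < n) :
    ∃ C : ℝ, ∀ ψ : ℝ → ℝ, ContDiff ℝ (⊤ : ℕ∞) ψ → (∀ r, ψ (-r) = ψ r) →
      (∀ r, ψ r ∈ Set.Icc (0 : ℝ) 1) →
      Function.support ψ ⊆ Set.Icc (-(3 / 2)) (3 / 2) →
      (∀ r : ℝ, |r| ≤ 5 / 4 → ψ r = 1) →
      ∀ f : E3 → E3 → ℝ, Measurable (fun p : E3 × E3 => f p.1 p.2) →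
        (∀ x v, 0 ≤ f x v) →
        ∀ A > (0 : ℝ), (∀ᵐ p : E3 × E3, f p.1 p.2 ≤ A) →
        Integrable (fun p : E3 × E3 => (1 + ‖p.2‖) * f p.1 p.2) volume →
        Integrable (fun p : E3 × E3 => (1 + ‖p.2‖) ^ n * f p.1 p.2) volume →
        ∀ (k : ℤ) (j₁ j₂ : ℕ) (K : E3 → E3),
          (∀ y, ‖K y‖ ≤ (2 : ℝ) ^ (2 * k) * (((1 + (2 : ℝ) ^ k * ‖y‖) ^ (10 : ℕ)))⁻¹) →
          ∀ x : E3,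
            ‖∫ p : E3 × E3,
                (f (x - p.1) p.2 * vphi ψ j₁ (Real.sqrt (p.2 0 ^ 2 + p.2 1 ^ 2)) *
                  vphi ψ j₂ ‖p.2‖) • K p.1‖ ≤
              C * min (A * (2 : ℝ) ^ (-k + 2 * (j₁ : ℤ) + (j₂ : ℤ)))
                (min ((2 : ℝ) ^ (2 * k - (j₂ : ℤ)) *
                        ∫ p : E3 × E3, (1 + ‖p.2‖) * f p.1 p.2)
                     ((2 : ℝ) ^ (2 * k) * (2 : ℝ) ^ (-(n * (j₂ : ℝ))) *
                        ∫ p : E3 × E3, (1 + ‖p.2‖) ^ n * f p.1 p.2)) := by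
  have hI0 : 0 ≤ ∫ y : E3, ((1 + ‖y‖) ^ (10 : ℕ))⁻¹ := integral_nonneg fun y => by positivity
  have hn0 : (0:ℝ) ≤ 2 ^ n := by positivity
  refine ⟨27 * (∫ y : E3, ((1 + ‖y‖) ^ (10 : ℕ))⁻¹) + 2 + 2 ^ n, ?_⟩
  intro ψ _ _ h01 hs h1 f _ hf A hA0 hA i1 inn k j₁ j₂ K hK x
  have b1 := sup_bound ψ h01 hs f hf A hA0 hA k j₁ j₂ K hK x
  have b2 := moment_bound 1 zero_le_one ψ h01 h1 f hf (by simpa using i1) k j₁ j₂ K hK x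
  have b3 := moment_bound n (by linarith) ψ h01 h1 f hf inn k j₁ j₂ K hK x
  simp only [Real.rpow_one, one_mul] at b2
  rw [Real.rpow_neg (by norm_num), Real.rpow_natCast, ← zpow_natCast, ← zpow_neg,
    ← zpow_add₀ (by norm_num), ← sub_eq_add_neg] at b2
  have m1 : 0 ≤ ∫ p : E3 × E3, (1 + ‖p.2‖) * f p.1 p.2 :=
    integral_nonneg fun p => mul_nonneg (by positivity) (hf _ _)
  have mn : 0 ≤ ∫ p : E3 × E3, (1 + ‖p.2‖) ^ n * f p.1 p.2 :=
    integral_nonneg fun p => mul_nonneg (by positivity) (hf _ _)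
  have hC : 0 ≤ 27 * (∫ y : E3, ((1 + ‖y‖) ^ (10 : ℕ))⁻¹) + 2 + 2 ^ n := by positivity
  rw [mul_min_of_nonneg _ _ hC, mul_min_of_nonneg _ _ hC]
  refine le_min (b1.trans ?_) (le_min (b2.trans ?_) (b3.trans ?_))
  · exact mul_le_mul_of_nonneg_right (by linarith) (by positivity)
  · exact mul_le_mul_of_nonneg_right (by linarith) (by positivity)
  · exact mul_le_mul_of_nonneg_right (by linarith) (by positivity)
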